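/- (Stability of effective nonzeros under noise) Let A ∈ R^{m×n} satisfy the 2k-RIP with constant δ ∈ (0,1). Let x, y ∈ R^n, let S_x, S_y be the index sets of the k largest-magnitude entries of x and y, set T = S_x ∪ S_y and h = y - x, and assume ‖x_{S_x^c}‖₂ ≤ ε_x, ‖y_{S_y^c}‖₂ ≤ ε_y, and Ah = e for some e ∈ R^m. Then ‖h_T‖₂ ≤ (√(2(n-2k))·δ / ((1-δ)√k))·(ε_x + ε_y) + (√(1+δ)/(1-δ))·‖e‖₂. -/

import Mathlib

open Finset Real Matrix

def IsSparse {n : ℕ} (s : ℕ) (u : Fin n → ℝ) : Prop :=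
  (Finset.univ.filter (fun i => u i ≠ 0)).card ≤ s

noncomputable def l2norm {n : ℕ} (u : Fin n → ℝ) : ℝ :=
  Real.sqrt (∑ i, (u i) ^ 2)

def SatisfiesRIP {m n : ℕ} (A : Matrix (Fin m) (Fin n) ℝ) (s : ℕ) (δ : ℝ) : Prop :=
  ∀ u : Fin n → ℝ, IsSparse s u →
    (1 - δ) * (l2norm u) ^ 2 ≤ (l2norm (A.mulVec u)) ^ 2 ∧
    (l2norm (A.mulVec u)) ^ 2 ≤ (1 + δ) * (l2norm u) ^ 2

/-- Restriction of a vector to an index set (zero outside). -/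
noncomputable def restrict {n : ℕ} (x : Fin n → ℝ) (I : Finset (Fin n)) :
    Fin n → ℝ := fun i => if i ∈ I then x i else 0

/-!
For disjoint index sets `T`, `U` let `u = A h_T` and `w = A h_U`. If `#T + #U ≤ 2k`, the RIP applies
to `α u + β w` for all `α`, `β`, and eliminating the scalars gives
`‖h_U‖² ⟨u, w⟩² ≤ ‖h_T‖² ((1 + δ) ‖h_U‖² - ‖w‖²) (‖w‖² - (1 - δ) ‖h_U‖²)`.
Averaging over subsets gives weaker bounds of this kind when `#T = 2k` and `#U = νk`. On the other
hand `‖u‖` is at least `√(1 - δ) ‖h_T‖`, so if `u + w` is short, then `-⟨u, w⟩` and `‖w‖` are both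
large. Comparing the two estimates `(1 - δ) ‖h_T‖`, provided `1 ≤ ν` or `1 ≤ (1 + ν) δ`.

In the remaining case the same estimate is used with `δ` replaced by the larger constant
`1 / (1 + ν)`, for which it is sharp. What is lost is recovered from
`(1 - (1 + ν) δ) (‖h_T‖² + ‖h_U‖²) ≤ ‖u + w‖²`, which follows by averaging the lower RIP bound on
sets of size `2k` and the upper one on differences of two columns. By Cauchy–Schwarz the two
multiples of `‖u + w‖` add up to at most `√(1 + δ) ‖u + w‖`.
-/

section Averaging

variable {ι E : Type*} [NormedAddCommGroup E] [InnerProductSpace ℝ E]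

lemma sum_sum_erase [DecidableEq ι] (f : ι → ℝ) (V : Finset ι) :
    ∑ i ∈ V, ∑ j ∈ V.erase i, f j = (#V - 1) * ∑ i ∈ V, f i := by
  rw [sum_congr rfl fun i hi => sum_erase_eq_sub hi, sum_sub_distrib, sum_const, nsmul_eq_mul,
    sub_one_mul]

lemma card_mul_sq_sum_le {f p : ι → ℝ} {s : ℕ} {c : ℝ} {V : Finset ι} (hs : 0 < s)
    (hsV : s ≤ #V) (hc : 0 ≤ c) (h : ∀ J ⊆ V, #J = s → c * (∑ i ∈ J, f i) ^ 2 ≤ ∑ i ∈ J, p i) :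
    s * (c * (∑ i ∈ V, f i) ^ 2) ≤ #V * ∑ i ∈ V, p i := by
  classical
  induction V using Finset.strongInduction with
  | H V ih =>
    rcases hsV.eq_or_lt with hsV | hsV
    · rw [← hsV]
      gcongr
      exact h V subset_rfl hsV.symm
    obtain ⟨t, ht⟩ : ∃ t, #V = t + 1 := Nat.exists_eq_succ_of_ne_zero (by omega)
    have hst : s ≤ t := by omega
    have ht0 : (0 : ℝ) < t := by exact_mod_cast hs.trans_le hst
    have herase : ∀ i ∈ V,
        s * (c * (∑ j ∈ V.erase i, f j) ^ 2) ≤ t * ∑ j ∈ V.erase i, p j := by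
      intro i hi
      have hcard : #(V.erase i) = t := by rw [card_erase_of_mem hi, ht, Nat.add_sub_cancel]
      have := ih _ (erase_ssubset hi) (hcard ▸ hst) fun J hJ => h J (hJ.trans (erase_subset i V))
      rwa [hcard] at this
    have hcard : (#V : ℝ) - 1 = t := by simp [ht]
    have hcs : (t * ∑ i ∈ V, f i) ^ 2 ≤ #V * ∑ i ∈ V, (∑ j ∈ V.erase i, f j) ^ 2 := by
      rw [← hcard, ← sum_sum_erase]
      exact sq_sum_le_card_mul_sum_sq
    refine le_of_mul_le_mul_left ?_ (pow_pos ht0 2)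
    calc (t : ℝ) ^ 2 * (s * (c * (∑ i ∈ V, f i) ^ 2))
        = s * c * (t * ∑ i ∈ V, f i) ^ 2 := by ring
      _ ≤ s * c * (#V * ∑ i ∈ V, (∑ j ∈ V.erase i, f j) ^ 2) := by gcongr
      _ = #V * ∑ i ∈ V, s * (c * (∑ j ∈ V.erase i, f j) ^ 2) := by
          rw [← mul_sum, ← mul_sum]
          ring
      _ ≤ #V * ∑ i ∈ V, t * ∑ j ∈ V.erase i, p j :=
          mul_le_mul_of_nonneg_left (sum_le_sum herase) (Nat.cast_nonneg _)
      _ = t ^ 2 * (#V * ∑ i ∈ V, p i) := by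
          rw [← mul_sum, sum_sum_erase, hcard]
          ring

lemma sum_sum_norm_sub_sq (b : ι → E) (J : Finset ι) :
    ∑ i ∈ J, ∑ j ∈ J, ‖b i - b j‖ ^ 2 = 2 * (#J * ∑ i ∈ J, ‖b i‖ ^ 2 - ‖∑ i ∈ J, b i‖ ^ 2) := by
  have hcross : ∑ i ∈ J, ∑ j ∈ J, inner ℝ (b i) (b j) = ‖∑ i ∈ J, b i‖ ^ 2 := by
    rw [← real_inner_self_eq_norm_sq, sum_inner]
    simp only [inner_sum]
  simp only [norm_sub_sq_real, sum_add_distrib, sum_sub_distrib, ← mul_sum, hcross, sum_const,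
    nsmul_eq_mul]
  ring

lemma sum_norm_sum_sub_sq (b : ι → E) (J : Finset ι) :
    ∑ i ∈ J, ‖∑ j ∈ J, b j - b i‖ ^ 2
      = (#J - 2) * ‖∑ i ∈ J, b i‖ ^ 2 + ∑ i ∈ J, ‖b i‖ ^ 2 := by
  simp only [norm_sub_sq_real, sum_add_distrib, sum_sub_distrib, ← mul_sum, ← inner_sum,
    real_inner_self_eq_norm_sq, sum_const, nsmul_eq_mul]
  ring

lemma card_mul_sum_norm_sq_le {b : ι → E} {r : ι → ℝ} {J : Finset ι}
    (h : ∀ i ∈ J, ∀ j ∈ J, i ≠ j → ‖b i - b j‖ ^ 2 ≤ r i + r j) :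
    #J * ∑ i ∈ J, ‖b i‖ ^ 2 ≤ ‖∑ i ∈ J, b i‖ ^ 2 + (#J - 1) * ∑ i ∈ J, r i := by
  classical
  have hrow : ∀ i ∈ J, ∑ j ∈ J, ‖b i - b j‖ ^ 2 ≤ (#J - 2) * r i + ∑ j ∈ J, r j := by
    intro i hi
    calc ∑ j ∈ J, ‖b i - b j‖ ^ 2
        = ∑ j ∈ J.erase i, ‖b i - b j‖ ^ 2 := (sum_erase J (by simp)).symm
      _ ≤ ∑ j ∈ J.erase i, (r i + r j) := sum_le_sum fun j hj =>
          h i hi j (mem_of_mem_erase hj) (ne_of_mem_erase hj).symm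
      _ = (#J - 2) * r i + ∑ j ∈ J, r j := by
          rw [sum_erase_eq_sub hi, sum_add_distrib, sum_const, nsmul_eq_mul]
          ring
  have hsum := sum_le_sum hrow
  rw [sum_sum_norm_sub_sq, sum_add_distrib, ← mul_sum, sum_const, nsmul_eq_mul] at hsum
  linarith

lemma card_mul_sum_le_mul_norm_sum_sq {b : ι → E} {q r : ι → ℝ} {s : ℕ} {J : Finset ι}
    (hs : 0 < s) (hsJ : s ≤ #J)
    (hq : ∀ S ⊆ J, #S = s → ∑ i ∈ S, q i ≤ ‖∑ i ∈ S, b i‖ ^ 2)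
    (hr : ∀ i ∈ J, ∀ j ∈ J, i ≠ j → ‖b i - b j‖ ^ 2 ≤ r i + r j) :
    #J * ∑ i ∈ J, q i ≤ s * ‖∑ i ∈ J, b i‖ ^ 2 + (#J - s) * ∑ i ∈ J, r i := by
  classical
  induction J using Finset.strongInduction with
  | H J ih =>
    rcases hsJ.eq_or_lt with hc | hc
    · rw [← hc, sub_self, zero_mul, add_zero]
      gcongr
      exact hq J subset_rfl hc.symm
    obtain ⟨t, ht⟩ : ∃ t, #J = t + 1 := Nat.exists_eq_succ_of_ne_zero (by omega)
    have hst : s ≤ t := by omega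
    have ht0 : (0 : ℝ) < t := by exact_mod_cast hs.trans_le hst
    have herase : ∀ i ∈ J, t * (∑ j ∈ J, q j - q i)
        ≤ s * ‖∑ j ∈ J, b j - b i‖ ^ 2 + (t - s) * (∑ j ∈ J, r j - r i) := by
      intro i hi
      have hcard : #(J.erase i) = t := by rw [card_erase_of_mem hi, ht, Nat.add_sub_cancel]
      have := ih _ (erase_ssubset hi) (hcard ▸ hst)
        (fun S hS => hq S (hS.trans (erase_subset i J)))
        fun j hj l hl => hr j (mem_of_mem_erase hj) l (mem_of_mem_erase hl)
      simpa only [sum_erase_eq_sub hi, hcard] using this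
    have hsum := sum_le_sum herase
    simp only [← mul_sum, sum_add_distrib, sum_sub_distrib, sum_norm_sum_sub_sq, sum_const,
      nsmul_eq_mul, ht] at hsum
    have hdiag := card_mul_sum_norm_sq_le hr
    rw [ht] at hdiag ⊢
    push_cast at hsum hdiag ⊢
    refine le_of_mul_le_mul_left ?_ (pow_pos ht0 2)
    linarith [mul_le_mul_of_nonneg_left hsum (by positivity : (0 : ℝ) ≤ t + 1),
      mul_le_mul_of_nonneg_left hdiag (Nat.cast_nonneg (α := ℝ) s)]

end Averaging

lemma one_sub_mul_le_of_mul_le {δ ν p q R X τ : ℝ} (hδ0 : 0 < δ) (hδ1 : δ ≤ 1) (hν1 : ν < 1)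
    (hνδ : 1 ≤ (1 + ν) * δ) (hp : 0 < p) (hq : 0 ≤ q) (hR : τ ≤ R)
    (hX : p * ((1 - δ) * τ) ≤ X ^ 2)
    (h : (2 - ν) * (q * X ^ 2) ≤ 2 * (p * (((1 + δ) * q - R) * (R - (1 - δ) * q)))) :
    (1 - δ) * τ ≤ 2 * ν * δ ^ 2 * q := by
  have hδ : 0 ≤ 1 - δ := sub_nonneg.mpr hδ1
  have : 0 < 1 - ν := sub_pos.mpr hν1
  have hcancel : (2 - ν) * (q * ((1 - δ) * τ))
      ≤ 2 * (((1 + δ) * q - R) * (R - (1 - δ) * q)) := by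
    refine le_of_mul_le_mul_left ?_ hp
    linarith [mul_le_mul_of_nonneg_left hX (mul_nonneg (by linarith : 0 ≤ 2 - ν) hq)]
  rcases hq.eq_or_lt with rfl | hq
  · have hR0 : R = 0 := by nlinarith
    nlinarith
  set D := (2 - ν) * (1 - δ) + 4 * δ * (1 - ν)
  have hD0 : 0 < D := by
    have : 0 ≤ (2 - ν) * (1 - δ) := mul_nonneg (by linarith) hδ
    positivity
  -- `((1 + δ) q - R) (R - (1 - δ) q) = δ² q² - (R - q)²` lies below its tangent at
  -- `R = q + δ (1 - ν) q`, which is where equality holds if `(1 + ν) δ = 1`.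
  have htangent : τ * D ≤ 2 * (δ ^ 2 * (1 + (1 - ν) ^ 2) + 2 * δ * (1 - ν)) * q := by
    refine le_of_mul_le_mul_left ?_ hq
    have hτ : 0 ≤ 4 * δ * (1 - ν) * q * (R - τ) :=
      mul_nonneg (by positivity) (sub_nonneg.mpr hR)
    linarith [sq_nonneg (R - q - δ * (1 - ν) * q)]
  have hcoef : (1 - δ) * (δ ^ 2 * (1 + (1 - ν) ^ 2) + 2 * δ * (1 - ν)) ≤ ν * δ ^ 2 * D := by
    have : 0 ≤ 2 * δ * (1 - ν) * (1 + δ) * ((1 + ν) * δ - 1) :=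
      mul_nonneg (by positivity) (sub_nonneg.mpr hνδ)
    linarith
  refine le_of_mul_le_mul_right ?_ hD0
  linarith [mul_le_mul_of_nonneg_left htangent hδ, mul_le_mul_of_nonneg_right hcoef hq.le]

lemma sqrt_one_sub_add_mul_sqrt_le {δ ν : ℝ} (hδ : 0 ≤ δ) (hν : 0 ≤ ν) (hνδ : (1 + ν) * δ ≤ 1) :
    √(1 - (1 + ν) * δ) + δ * √((1 + ν) * ν) ≤ √(1 + ν * δ) := by
  set a := √(1 - (1 + ν) * δ)
  set b := √((1 + ν) * δ)
  set c := √(ν * δ)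
  have ha : a ^ 2 = 1 - (1 + ν) * δ := Real.sq_sqrt (sub_nonneg.mpr hνδ)
  have hb : b ^ 2 = (1 + ν) * δ := Real.sq_sqrt (by positivity)
  have hc : c ^ 2 = ν * δ := Real.sq_sqrt (by positivity)
  have hbc : δ * √((1 + ν) * ν) = b * c := by
    rw [← Real.sqrt_mul (by positivity), show (1 + ν) * δ * (ν * δ) = δ ^ 2 * ((1 + ν) * ν) by ring,
      Real.sqrt_mul (sq_nonneg δ), Real.sqrt_sq hδ]
  refine Real.le_sqrt_of_sq_le ?_
  calc (a + δ * √((1 + ν) * ν)) ^ 2 = (a * 1 + b * c) ^ 2 := by rw [hbc, mul_one]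
    _ ≤ (a ^ 2 + b ^ 2) * (1 ^ 2 + c ^ 2) := by linarith [sq_nonneg (a * c - b * 1)]
    _ = 1 + ν * δ := by rw [ha, hb, hc]; ring

section NearIsometry

variable {E : Type*} [NormedAddCommGroup E] [InnerProductSpace ℝ E]

lemma mul_inner_sq_le_of_near_isometry {x y : E} {p q δ : ℝ} (hδ : 0 < δ)
    (h : ∀ α β : ℝ, (1 - δ) * (α ^ 2 * p + β ^ 2 * q) ≤ ‖α • x + β • y‖ ^ 2 ∧
      ‖α • x + β • y‖ ^ 2 ≤ (1 + δ) * (α ^ 2 * p + β ^ 2 * q)) :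
    q * inner ℝ x y ^ 2
      ≤ p * (((1 + δ) * q - ‖y‖ ^ 2) * (‖y‖ ^ 2 - (1 - δ) * q)) := by
  have hy : (1 - δ) * q ≤ ‖y‖ ^ 2 ∧ ‖y‖ ^ 2 ≤ (1 + δ) * q := by simpa using h 0 1
  have hq : 0 ≤ q := nonneg_of_mul_nonneg_right (by linarith [hy.1, hy.2] : 0 ≤ 2 * δ * q)
    (by positivity)
  rcases hq.eq_or_lt with rfl | hq
  · simp_all
  set lo := ‖y‖ ^ 2 - (1 - δ) * q
  set hi := (1 + δ) * q - ‖y‖ ^ 2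
  -- The upper bound at `β = -lo` minus the lower bound at `β = hi` does not involve `‖x‖`.
  have hquad : ∀ α : ℝ, 0 ≤ p * (α * α) + 2 * (q * inner ℝ x y) * α + q * (hi * lo) := by
    intro α
    have hup := (h α (-lo)).2
    have hdown := (h α hi).1
    simp only [norm_add_sq_real, inner_smul_left, inner_smul_right, norm_smul, mul_pow,
      Real.norm_eq_abs, sq_abs, conj_trivial, even_two.neg_pow] at hup hdown
    have hsum : lo + hi = 2 * δ * q := by ring
    refine le_of_mul_le_mul_left ?_ (by positivity : 0 < 2 * δ)
    linear_combination hup + hdown + (hi * lo) * hsum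
  have hdisc := discrim_le_zero hquad
  rw [discrim] at hdisc
  refine le_of_mul_le_mul_left ?_ hq
  linarith

lemma inner_sq_le_of_near_isometry {x y : E} {p q δ : ℝ} (hδ : 0 < δ)
    (h : ∀ α β : ℝ, (1 - δ) * (α ^ 2 * p + β ^ 2 * q) ≤ ‖α • x + β • y‖ ^ 2 ∧
      ‖α • x + β • y‖ ^ 2 ≤ (1 + δ) * (α ^ 2 * p + β ^ 2 * q)) :
    inner ℝ x y ^ 2 ≤ δ ^ 2 * (p * q) := by
  have hx : (1 - δ) * p ≤ ‖x‖ ^ 2 ∧ ‖x‖ ^ 2 ≤ (1 + δ) * p := by simpa using h 1 0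
  have hy : (1 - δ) * q ≤ ‖y‖ ^ 2 ∧ ‖y‖ ^ 2 ≤ (1 + δ) * q := by simpa using h 0 1
  have hp : 0 ≤ p := nonneg_of_mul_nonneg_right (by linarith : 0 ≤ 2 * δ * p) (by positivity)
  have hq : 0 ≤ q := nonneg_of_mul_nonneg_right (by linarith : 0 ≤ 2 * δ * q) (by positivity)
  rcases hq.eq_or_lt with rfl | hq
  · have : y = 0 := by simpa using hy.2
    simp [this]
  have hgap : ((1 + δ) * q - ‖y‖ ^ 2) * (‖y‖ ^ 2 - (1 - δ) * q) ≤ (δ * q) ^ 2 := by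
    linarith [sq_nonneg (‖y‖ ^ 2 - q)]
  refine le_of_mul_le_mul_left ?_ hq
  linarith [mul_inner_sq_le_of_near_isometry hδ h, mul_le_mul_of_nonneg_left hgap hp]

lemma mul_sub_norm_add_le_neg_inner {u v : E} {c : ℝ} (hc : ‖u + v‖ ≤ c) (hu : c ≤ ‖u‖) :
    c * (c - ‖u + v‖) ≤ -inner ℝ u v := by
  have hcs := real_inner_le_norm u (u + v)
  rw [inner_add_right, real_inner_self_eq_norm_sq] at hcs
  have : c * (c - ‖u + v‖) ≤ ‖u‖ * (‖u‖ - ‖u + v‖) :=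
    mul_le_mul hu (by linarith) (by linarith) (norm_nonneg u)
  linarith

end NearIsometry

section RestrictedIsometry

variable {ι E : Type*} [NormedAddCommGroup E] [InnerProductSpace ℝ E]

/-- The restricted isometry property of order `s` for a family of vectors: any `s` of them are
orthonormal up to the factors `1 ± δ`. For a matrix, the family consists of its columns. -/
def IsRestrictedIsometry (v : ι → E) (s : ℕ) (δ : ℝ) : Prop :=
  ∀ S : Finset ι, #S ≤ s → ∀ h : ι → ℝ,
    (1 - δ) * ∑ i ∈ S, h i ^ 2 ≤ ‖∑ i ∈ S, h i • v i‖ ^ 2 ∧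
      ‖∑ i ∈ S, h i • v i‖ ^ 2 ≤ (1 + δ) * ∑ i ∈ S, h i ^ 2

namespace IsRestrictedIsometry

variable {v : ι → E} {s k : ℕ} {δ ν : ℝ} {I J T U : Finset ι}

lemma mono {δ' : ℝ} (hv : IsRestrictedIsometry v s δ) (hδ : δ ≤ δ') :
    IsRestrictedIsometry v s δ' := by
  intro S hS h
  have hsum : 0 ≤ ∑ i ∈ S, h i ^ 2 := sum_nonneg fun i _ => sq_nonneg (h i)
  exact ⟨(mul_le_mul_of_nonneg_right (by linarith) hsum).trans (hv S hS h).1,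
    (hv S hS h).2.trans (mul_le_mul_of_nonneg_right (by linarith) hsum)⟩

lemma norm_sq_smul_add_smul (hv : IsRestrictedIsometry v s δ) (hIJ : Disjoint I J)
    (hs : #I + #J ≤ s) (h : ι → ℝ) (α β : ℝ) :
    (1 - δ) * (α ^ 2 * ∑ i ∈ I, h i ^ 2 + β ^ 2 * ∑ i ∈ J, h i ^ 2)
        ≤ ‖α • ∑ i ∈ I, h i • v i + β • ∑ i ∈ J, h i • v i‖ ^ 2 ∧
      ‖α • ∑ i ∈ I, h i • v i + β • ∑ i ∈ J, h i • v i‖ ^ 2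
        ≤ (1 + δ) * (α ^ 2 * ∑ i ∈ I, h i ^ 2 + β ^ 2 * ∑ i ∈ J, h i ^ 2) := by
  classical
  set c : ι → ℝ := fun i => if i ∈ I then α * h i else β * h i
  have hI : ∀ i ∈ I, c i = α * h i := fun i hi => if_pos hi
  have hJ : ∀ i ∈ J, c i = β * h i := fun i hi => if_neg (disjoint_right.mp hIJ hi)
  have hsq : ∑ i ∈ I ∪ J, c i ^ 2 = α ^ 2 * ∑ i ∈ I, h i ^ 2 + β ^ 2 * ∑ i ∈ J, h i ^ 2 := by
    rw [sum_union hIJ, mul_sum, mul_sum]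
    exact congrArg₂ (· + ·) (sum_congr rfl fun i hi => by rw [hI i hi, mul_pow])
      (sum_congr rfl fun i hi => by rw [hJ i hi, mul_pow])
  have hvec : ∑ i ∈ I ∪ J, c i • v i
      = α • ∑ i ∈ I, h i • v i + β • ∑ i ∈ J, h i • v i := by
    rw [sum_union hIJ, smul_sum, smul_sum]
    exact congrArg₂ (· + ·) (sum_congr rfl fun i hi => by rw [hI i hi, mul_smul])
      (sum_congr rfl fun i hi => by rw [hJ i hi, mul_smul])
  rw [← hsq, ← hvec]
  exact hv _ ((card_union_le I J).trans hs) c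

lemma mul_inner_sq_le_card_mul (hv : IsRestrictedIsometry v s δ) (hδ : 0 < δ) (hTU : Disjoint T U)
    {i : ℕ} (hi : 0 < i) (hiT : i ≤ #T) (hs : i + #U ≤ s) (h : ι → ℝ) :
    i * ((∑ j ∈ U, h j ^ 2) * inner ℝ (∑ j ∈ T, h j • v j) (∑ j ∈ U, h j • v j) ^ 2)
      ≤ #T * ((∑ j ∈ T, h j ^ 2) *
        (((1 + δ) * ∑ j ∈ U, h j ^ 2 - ‖∑ j ∈ U, h j • v j‖ ^ 2) *
          (‖∑ j ∈ U, h j • v j‖ ^ 2 - (1 - δ) * ∑ j ∈ U, h j ^ 2))) := by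
  have := card_mul_sq_sum_le (f := fun j => inner ℝ (h j • v j) (∑ l ∈ U, h l • v l))
    (p := fun j => h j ^ 2 *
      (((1 + δ) * ∑ l ∈ U, h l ^ 2 - ‖∑ l ∈ U, h l • v l‖ ^ 2) *
        (‖∑ l ∈ U, h l • v l‖ ^ 2 - (1 - δ) * ∑ l ∈ U, h l ^ 2)))
    hi hiT (sum_nonneg fun j _ => sq_nonneg (h j)) fun I hI hIi => by
      rw [← sum_inner, ← sum_mul]
      exact mul_inner_sq_le_of_near_isometry hδ
        (hv.norm_sq_smul_add_smul (disjoint_of_subset_left hI hTU) (by omega) h)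
  rwa [← sum_inner, ← sum_mul] at this

lemma mul_inner_sq_le_card_mul_card_mul (hv : IsRestrictedIsometry v s δ) (hδ : 0 < δ)
    (hTU : Disjoint T U) {i j : ℕ} (hi : 0 < i) (hj : 0 < j) (hiT : i ≤ #T) (hjU : j ≤ #U)
    (hs : i + j ≤ s) (h : ι → ℝ) :
    j * (i * inner ℝ (∑ l ∈ T, h l • v l) (∑ l ∈ U, h l • v l) ^ 2)
      ≤ #U * (#T * (δ ^ 2 * ((∑ l ∈ T, h l ^ 2) * ∑ l ∈ U, h l ^ 2))) := by
  have hblock : ∀ J ⊆ U, #J = j →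
      i * inner ℝ (∑ l ∈ T, h l • v l) (∑ l ∈ J, h l • v l) ^ 2
        ≤ #T * (δ ^ 2 * ((∑ l ∈ T, h l ^ 2) * ∑ l ∈ J, h l ^ 2)) := by
    intro J hJ hJj
    have := card_mul_sq_sum_le (f := fun l => inner ℝ (h l • v l) (∑ l ∈ J, h l • v l))
      (p := fun l => δ ^ 2 * (h l ^ 2 * ∑ l ∈ J, h l ^ 2)) hi hiT zero_le_one fun I hI hIi => by
        rw [← sum_inner, ← mul_sum, ← sum_mul, one_mul]
        exact inner_sq_le_of_near_isometry hδ (hv.norm_sq_smul_add_smul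
          (disjoint_of_subset_left hI (disjoint_of_subset_right hJ hTU)) (by omega) h)
    rwa [← sum_inner, ← mul_sum, ← sum_mul, one_mul] at this
  have := card_mul_sq_sum_le (f := fun l => inner ℝ (∑ l ∈ T, h l • v l) (h l • v l))
    (p := fun l => #T * (δ ^ 2 * ((∑ l ∈ T, h l ^ 2) * h l ^ 2))) hj hjU (Nat.cast_nonneg i)
    (by simpa only [← inner_sum, ← mul_sum] using hblock)
  simpa only [← inner_sum, ← mul_sum] using this

lemma mul_sum_sq_le_mul_norm_sq (hv : IsRestrictedIsometry v s δ) (hs : 2 ≤ s)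
    (hsJ : s ≤ #J) (h : ι → ℝ) :
    (s * (1 + δ) - 2 * δ * #J) * ∑ i ∈ J, h i ^ 2 ≤ s * ‖∑ i ∈ J, h i • v i‖ ^ 2 := by
  have hpair : ∀ i ∈ J, ∀ j ∈ J, i ≠ j →
      ‖h i • v i - h j • v j‖ ^ 2 ≤ (1 + δ) * h i ^ 2 + (1 + δ) * h j ^ 2 := by
    intro i _ j _ hij
    have := (hv.norm_sq_smul_add_smul (disjoint_singleton.mpr hij) hs h 1 (-1)).2
    simpa [← sub_eq_add_neg, mul_add] using this
  have := card_mul_sum_le_mul_norm_sum_sq (q := fun i => (1 - δ) * h i ^ 2) (by omega) hsJ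
    (fun S _ hS => by simpa only [mul_sum] using (hv S hS.le h).1) hpair
  simp only [← mul_sum] at this
  linarith

lemma one_sub_mul_le_of_mul_le_inner_sq (hv : IsRestrictedIsometry v (2 * k) δ) (hk : 0 < k)
    (hδ0 : 0 < δ) (hδ1 : δ ≤ 1) (hTU : Disjoint T U) (hT : #T = 2 * k) (hν : ν * k = #U)
    (hνδ : 1 ≤ ν ∨ 1 ≤ (1 + ν) * δ) {h : ι → ℝ} {τ : ℝ} (hp : 0 < ∑ i ∈ T, h i ^ 2)
    (hτ : τ ≤ ‖∑ i ∈ U, h i • v i‖ ^ 2)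
    (hX : (∑ i ∈ T, h i ^ 2) * ((1 - δ) * τ)
      ≤ inner ℝ (∑ i ∈ T, h i • v i) (∑ i ∈ U, h i • v i) ^ 2) :
    (1 - δ) * τ ≤ 2 * ν * δ ^ 2 * ∑ i ∈ U, h i ^ 2 := by
  have hk0 : (0 : ℝ) < k := by exact_mod_cast hk
  have hq : 0 ≤ ∑ i ∈ U, h i ^ 2 := sum_nonneg fun i _ => sq_nonneg (h i)
  rcases le_or_gt 1 ν with hν1 | hν1
  · have hkU : k ≤ #U := by
      have := mul_le_mul_of_nonneg_right hν1 hk0.le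
      rw [hν, one_mul] at this
      exact_mod_cast this
    have hlarge := hv.mul_inner_sq_le_card_mul_card_mul hδ0 hTU hk hk (by omega) hkU (by omega) h
    rw [hT, ← hν] at hlarge
    push_cast at hlarge
    refine le_of_mul_le_mul_left (hX.trans ?_) hp
    refine le_of_mul_le_mul_left ?_ (pow_pos hk0 2)
    linarith
  · have hUk : #U < k := by
      have := mul_lt_mul_of_pos_right hν1 hk0
      rw [hν, one_mul] at this
      exact_mod_cast this
    have hsmall := hv.mul_inner_sq_le_card_mul hδ0 hTU (i := 2 * k - #U) (by omega) (by omega)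
      (by omega) h
    rw [hT, Nat.cast_sub (by omega), ← hν] at hsmall
    push_cast at hsmall
    refine one_sub_mul_le_of_mul_le hδ0 hδ1 hν1 (hνδ.resolve_left hν1.not_ge) hp hq hτ hX ?_
    refine le_of_mul_le_mul_left ?_ hk0
    linarith

lemma one_sub_mul_sqrt_le_of_one_le (hv : IsRestrictedIsometry v (2 * k) δ) (hk : 0 < k)
    (hδ0 : 0 < δ) (hδ1 : δ ≤ 1) (hTU : Disjoint T U) (hT : #T = 2 * k) (hν : ν * k = #U)
    (hνδ : 1 ≤ ν ∨ 1 ≤ (1 + ν) * δ) (h : ι → ℝ) :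
    (1 - δ) * √(∑ i ∈ T, h i ^ 2)
      ≤ √(2 * ν) * δ * √(∑ i ∈ U, h i ^ 2)
        + √(1 - δ) * ‖∑ i ∈ T, h i • v i + ∑ i ∈ U, h i • v i‖ := by
  have hν0 : 0 ≤ ν :=
    nonneg_of_mul_nonneg_left (hν ▸ Nat.cast_nonneg #U) (by exact_mod_cast hk : (0 : ℝ) < k)
  have hδ : 0 ≤ 1 - δ := sub_nonneg.mpr hδ1
  have hr := Real.sq_sqrt hδ
  have hp := Real.sq_sqrt (sum_nonneg fun i _ => sq_nonneg (h i) : 0 ≤ ∑ i ∈ T, h i ^ 2)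
  have hq := Real.sq_sqrt (sum_nonneg fun i _ => sq_nonneg (h i) : 0 ≤ ∑ i ∈ U, h i ^ 2)
  set r := √(1 - δ)
  set a := √(∑ i ∈ T, h i ^ 2)
  set u := ∑ i ∈ T, h i • v i
  set w := ∑ i ∈ U, h i • v i
  suffices r * (r * a - ‖u + w‖) ≤ √(2 * ν) * δ * √(∑ i ∈ U, h i ^ 2) by
    linear_combination this - a * hr
  rcases le_or_gt (r * a - ‖u + w‖) 0 with ht | ht
  · exact (mul_nonpos_of_nonneg_of_nonpos (Real.sqrt_nonneg _) ht).trans (by positivity)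
  have hnorm : r * a ≤ ‖u‖ := by
    refine le_of_sq_le_sq ?_ (norm_nonneg u)
    rw [mul_pow, hr, hp]
    exact (hv T hT.le h).1
  have hra : 0 < r * a := by linarith [norm_nonneg (u + w)]
  have htw : (r * a - ‖u + w‖) ^ 2 ≤ ‖w‖ ^ 2 := by
    have : ‖u‖ ≤ ‖u + w‖ + ‖w‖ := by simpa using norm_sub_le (u + w) w
    exact pow_le_pow_left₀ ht.le (by linarith) 2
  have hinner : (∑ i ∈ T, h i ^ 2) * ((1 - δ) * (r * a - ‖u + w‖) ^ 2) ≤ inner ℝ u w ^ 2 := by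
    have := pow_le_pow_left₀ (by positivity)
      (mul_sub_norm_add_le_neg_inner (sub_pos.mp ht).le hnorm) 2
    rw [← hp, ← hr]
    linarith
  have hpos : 0 < ∑ i ∈ T, h i ^ 2 := hp ▸ sq_pos_of_ne_zero (right_ne_zero_of_mul hra.ne')
  refine le_of_sq_le_sq ?_ (by positivity)
  rw [mul_pow, mul_pow, mul_pow, hr, hq, Real.sq_sqrt (by positivity : 0 ≤ 2 * ν)]
  exact hv.one_sub_mul_le_of_mul_le_inner_sq hk hδ0 hδ1 hTU hT hν hνδ hpos htw hinner

lemma sqrt_mul_sqrt_le_norm (hv : IsRestrictedIsometry v (2 * k) δ) (hk : 0 < k)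
    (hTU : Disjoint T U) (hT : #T = 2 * k) (hν : ν * k = #U) (hνδ : (1 + ν) * δ ≤ 1) (h : ι → ℝ) :
    √(1 - (1 + ν) * δ) * √(∑ i ∈ T, h i ^ 2)
      ≤ ‖∑ i ∈ T, h i • v i + ∑ i ∈ U, h i • v i‖ := by
  classical
  have hk0 : (0 : ℝ) < k := by exact_mod_cast hk
  have hθ : 0 ≤ 1 - (1 + ν) * δ := sub_nonneg.mpr hνδ
  have hlow := hv.mul_sum_sq_le_mul_norm_sq (J := T ∪ U) (by omega)
    (by rw [card_union_of_disjoint hTU]; omega) h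
  rw [card_union_of_disjoint hTU, sum_union hTU, sum_union hTU, hT] at hlow
  push_cast at hlow
  rw [← hν] at hlow
  rw [← Real.sqrt_mul hθ, Real.sqrt_le_left (norm_nonneg _)]
  have hq := mul_nonneg hθ (sum_nonneg fun i _ => sq_nonneg (h i) : 0 ≤ ∑ i ∈ U, h i ^ 2)
  refine le_of_mul_le_mul_left ?_ (by positivity : (0 : ℝ) < 2 * k)
  linarith [mul_nonneg hk0.le hq]

theorem one_sub_mul_sqrt_le (hv : IsRestrictedIsometry v (2 * k) δ) (hk : 0 < k)
    (hδ0 : 0 < δ) (hδ1 : δ ≤ 1) (hTU : Disjoint T U) (hT : #T = 2 * k) (hν : ν * k = #U)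
    (h : ι → ℝ) :
    (1 - δ) * √(∑ i ∈ T, h i ^ 2)
      ≤ √(2 * ν) * δ * √(∑ i ∈ U, h i ^ 2)
        + √(1 + δ) * ‖∑ i ∈ T, h i • v i + ∑ i ∈ U, h i • v i‖ := by
  have hν0 : 0 ≤ ν :=
    nonneg_of_mul_nonneg_left (hν ▸ Nat.cast_nonneg #U) (by exact_mod_cast hk : (0 : ℝ) < k)
  have hmono := Real.sqrt_le_sqrt (by linarith : 1 - δ ≤ 1 + δ)
  by_cases hνδ : 1 ≤ ν ∨ 1 ≤ (1 + ν) * δ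
  · exact (hv.one_sub_mul_sqrt_le_of_one_le hk hδ0 hδ1 hTU hT hν hνδ h).trans (by gcongr)
  obtain ⟨hν1, hνδ⟩ : ν < 1 ∧ (1 + ν) * δ < 1 := by simpa only [not_or, not_le] using hνδ
  have hlow := hv.sqrt_mul_sqrt_le_norm hk hTU hT hν hνδ.le h
  set δ' := (1 + ν)⁻¹
  have hδ'ν : (1 + ν) * δ' = 1 := mul_inv_cancel₀ (by positivity)
  have hδδ' : δ ≤ δ' :=
    le_of_mul_le_mul_left (hνδ.le.trans_eq hδ'ν.symm) (by positivity : 0 < 1 + ν)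
  have hmain := (hv.mono hδδ').one_sub_mul_sqrt_le_of_one_le hk (by positivity)
    (inv_le_one_of_one_le₀ (by linarith)) hTU hT hν (.inr hδ'ν.ge) h
  have hcoef : (1 + ν) * √(1 - δ') = √((1 + ν) * ν) := by
    rw [← Real.sqrt_sq (by positivity : 0 ≤ 1 + ν), ← Real.sqrt_mul (sq_nonneg _),
      Real.sqrt_sq (by positivity)]
    congr 1
    linear_combination -(1 + ν) * hδ'ν
  set a := √(∑ i ∈ T, h i ^ 2)
  set b := √(∑ i ∈ U, h i ^ 2)
  set ε := ‖∑ i ∈ T, h i • v i + ∑ i ∈ U, h i • v i‖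
  set θ := 1 - (1 + ν) * δ
  calc (1 - δ) * a = √θ * (√θ * a) + δ * ((1 + ν) * ((1 - δ') * a)) := by
        linear_combination -a * Real.sq_sqrt (sub_nonneg.mpr hνδ.le) + δ * a * hδ'ν
    _ ≤ √θ * ε + δ * ((1 + ν) * (√(2 * ν) * δ' * b + √(1 - δ') * ε)) := by gcongr
    _ = √(2 * ν) * δ * b + (√θ + δ * √((1 + ν) * ν)) * ε := by
        linear_combination δ * √(2 * ν) * b * hδ'ν + δ * ε * hcoef
    _ ≤ √(2 * ν) * δ * b + √(1 + ν * δ) * ε := by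
        gcongr
        exact sqrt_one_sub_add_mul_sqrt_le hδ0.le hν0 hνδ.le
    _ ≤ √(2 * ν) * δ * b + √(1 + δ) * ε := by
        gcongr
        exact mul_le_of_le_one_left hδ0.le hν1.le

end IsRestrictedIsometry

end RestrictedIsometry

section RIP

variable {m n s k : ℕ} {A : Matrix (Fin m) (Fin n) ℝ} {δ : ℝ}

lemma l2norm_eq_norm (u : Fin n → ℝ) : l2norm u = ‖WithLp.toLp 2 u‖ := by
  simp [l2norm, EuclideanSpace.norm_eq]

lemma l2norm_restrict (u : Fin n → ℝ) (I : Finset (Fin n)) :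
    l2norm (restrict u I) = √(∑ i ∈ I, u i ^ 2) := by
  simp [l2norm, _root_.restrict, ite_pow]

lemma l2norm_restrict_mono (u : Fin n → ℝ) {I J : Finset (Fin n)} (hIJ : I ⊆ J) :
    l2norm (restrict u I) ≤ l2norm (restrict u J) := by
  rw [l2norm_restrict, l2norm_restrict]
  exact Real.sqrt_le_sqrt (sum_le_sum_of_subset_of_nonneg hIJ fun i _ _ => sq_nonneg (u i))

lemma l2norm_restrict_sub_le (x y : Fin n → ℝ) (I : Finset (Fin n)) :
    l2norm (restrict (y - x) I) ≤ l2norm (restrict x I) + l2norm (restrict y I) := by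
  have hsub : restrict (y - x) I = restrict y I - restrict x I := by
    ext i
    by_cases hi : i ∈ I <;> simp [_root_.restrict, hi]
  rw [hsub, l2norm_eq_norm, l2norm_eq_norm, l2norm_eq_norm, WithLp.toLp_sub, add_comm]
  exact norm_sub_le _ _

lemma isSparse_restrict (u : Fin n → ℝ) {I : Finset (Fin n)} (hI : #I ≤ s) :
    IsSparse s (restrict u I) := by
  refine (card_le_card fun i hi => ?_).trans hI
  by_contra hiI
  simp [_root_.restrict, hiI] at hi

lemma sum_smul_toLp_col (A : Matrix (Fin m) (Fin n) ℝ) (u : Fin n → ℝ) (I : Finset (Fin n)) :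
    ∑ i ∈ I, u i • WithLp.toLp 2 (A.col i) = WithLp.toLp 2 (A.mulVec (restrict u I)) := by
  ext j
  simp [Matrix.mulVec, dotProduct, _root_.restrict, Matrix.col_apply, mul_comm]

lemma SatisfiesRIP.isRestrictedIsometry_col (hA : SatisfiesRIP A s δ) :
    IsRestrictedIsometry (fun i => WithLp.toLp 2 (A.col i)) s δ := by
  intro I hI u
  have hu : l2norm (restrict u I) ^ 2 = ∑ i ∈ I, u i ^ 2 := by
    rw [l2norm_restrict, Real.sq_sqrt (sum_nonneg fun i _ => sq_nonneg (u i))]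
  rw [sum_smul_toLp_col, ← l2norm_eq_norm, ← hu]
  exact hA _ (isSparse_restrict u hI)

theorem SatisfiesRIP.l2norm_restrict_le (hA : SatisfiesRIP A (2 * k) δ) (hk : 0 < k)
    (hδ0 : 0 < δ) (hδ1 : δ < 1) {T : Finset (Fin n)} (hT : #T = 2 * k) (h : Fin n → ℝ) :
    l2norm (restrict h T) ≤
      √(2 * (n - 2 * k)) * δ / ((1 - δ) * √k) * l2norm (restrict h Tᶜ)
        + √(1 + δ) / (1 - δ) * l2norm (A.mulVec h) := by
  have hk0 : (0 : ℝ) < k := by exact_mod_cast hk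
  have hδ : 0 < 1 - δ := sub_pos.mpr hδ1
  have hcompl : ((n : ℝ) - 2 * k) / k * k = #Tᶜ := by
    rw [div_mul_cancel₀ _ hk0.ne', card_compl, hT, Fintype.card_fin,
      Nat.cast_sub (hT ▸ card_finset_fin_le T)]
    push_cast
    rfl
  have huniv : restrict h univ = h := by
    ext i
    simp [_root_.restrict]
  have hmain := hA.isRestrictedIsometry_col.one_sub_mul_sqrt_le hk hδ0 hδ1.le disjoint_compl_right
    hT hcompl h
  rw [sum_add_sum_compl, sum_smul_toLp_col, huniv, ← l2norm_eq_norm, ← l2norm_restrict,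
    ← l2norm_restrict, ← mul_div_assoc, Real.sqrt_div' _ hk0.le] at hmain
  refine le_of_mul_le_mul_left (hmain.trans_eq ?_) hδ
  field_simp

end RIP

theorem stability_effective_nonzeros_general {m n k : ℕ} (hk : 0 < k) (hn : 2 * k ≤ n)
    (A : Matrix (Fin m) (Fin n) ℝ) (δ : ℝ) (hδ0 : 0 < δ) (hδ1 : δ < 1)
    (hRIP : SatisfiesRIP A (2 * k) δ)
    (x y : Fin n → ℝ) (Sx Sy : Finset (Fin n)) (hSx : #Sx ≤ k) (hSy : #Sy ≤ k)
    (εx εy : ℝ)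
    (htailx : l2norm (restrict x Sxᶜ) ≤ εx)
    (htaily : l2norm (restrict y Syᶜ) ≤ εy)
    (e : Fin m → ℝ) (he : A.mulVec (y - x) = e) :
    l2norm (restrict (y - x) (Sx ∪ Sy)) ≤
      √(2 * (n - 2 * k)) * δ / ((1 - δ) * √k) * (εx + εy) + √(1 + δ) / (1 - δ) * l2norm e := by
  obtain ⟨T, hST, hT⟩ := exists_superset_card_eq (s := Sx ∪ Sy) (n := 2 * k)
    ((card_union_le Sx Sy).trans (by omega)) (by simpa using hn)
  obtain ⟨hxT, hyT⟩ := union_subset_iff.mp hST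
  have htail : l2norm (restrict (y - x) Tᶜ) ≤ εx + εy :=
    (l2norm_restrict_sub_le x y Tᶜ).trans <| add_le_add
      ((l2norm_restrict_mono x (compl_subset_compl.mpr hxT)).trans htailx)
      ((l2norm_restrict_mono y (compl_subset_compl.mpr hyT)).trans htaily)
  have : 0 < 1 - δ := sub_pos.mpr hδ1
  calc l2norm (restrict (y - x) (Sx ∪ Sy))
      ≤ l2norm (restrict (y - x) T) := l2norm_restrict_mono (y - x) hST
    _ ≤ √(2 * (n - 2 * k)) * δ / ((1 - δ) * √k) * l2norm (restrict (y - x) Tᶜ)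
          + √(1 + δ) / (1 - δ) * l2norm (A.mulVec (y - x)) :=
        hRIP.l2norm_restrict_le hk hδ0 hδ1 hT (y - x)
    _ ≤ √(2 * (n - 2 * k)) * δ / ((1 - δ) * √k) * (εx + εy) + √(1 + δ) / (1 - δ) * l2norm e := by
        rw [he]
        gcongr

/-- Stability of effective nonzeros under noise (Theorem 3 of the paper):
if `A` satisfies the 2k-RIP with constant δ, `S_x` and `S_y` are the index sets
of the k largest-magnitude entries of x and y, `T = S_x ∪ S_y`, `h = y − x`,
the tails satisfy `‖x_{S_x^c}‖₂ ≤ ε_x`, `‖y_{S_y^c}‖₂ ≤ ε_y`, and `Ah = e`, then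
`‖h_T‖₂ ≤ (√(2(n−2k))·δ/((1−δ)√k))·(ε_x+ε_y) + (√(1+δ)/(1−δ))·‖e‖₂`. -/
theorem stability_effective_nonzeros {m n k : ℕ} (hk : 0 < k) (hn : 2 * k ≤ n)
    (A : Matrix (Fin m) (Fin n) ℝ) (δ : ℝ) (hδ0 : 0 < δ) (hδ1 : δ < 1)
    (hRIP : SatisfiesRIP A (2 * k) δ)
    (x y : Fin n → ℝ) (Sx Sy : Finset (Fin n))
    (hSx : Sx.card = k) (hSy : Sy.card = k)
    (hSxTop : ∀ i ∈ Sx, ∀ j ∉ Sx, |x j| ≤ |x i|)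
    (hSyTop : ∀ i ∈ Sy, ∀ j ∉ Sy, |y j| ≤ |y i|)
    (εx εy : ℝ)
    (htailx : l2norm (restrict x Sxᶜ) ≤ εx)
    (htaily : l2norm (restrict y Syᶜ) ≤ εy)
    (e : Fin m → ℝ) (he : A.mulVec (y - x) = e) :
    l2norm (restrict (y - x) (Sx ∪ Sy)) ≤
      (Real.sqrt (2 * ((n : ℝ) - 2 * k)) * δ / ((1 - δ) * Real.sqrt k)) *
        (εx + εy) +
      (Real.sqrt (1 + δ) / (1 - δ)) * l2norm e :=
  stability_effective_nonzeros_general hk hn A δ hδ0 hδ1 hRIP x y Sx Sy hSx.le hSy.le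
    εx εy htailx htaily e he
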